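/- For every real α > −1 (α ≠ −2 automatic): the three leading principal minors of B₊(α) equal p₊,1(α) = (2α²+6α+6)/(3(α+2)), p₊,2(α) = −[α⁴ − 4(1−√2)α³ − 12(3−√2)α² − 12(6−√2)α − 48]/(12(α+2)²), and p₊,3(α) = det B₊(α) = −α[6α⁵ + (23+3√2)α⁴ + (13+19√2)α³ − (77−38√2)α² − (157−24√2)α − 96]/(12(α+2)³); moreover det B₋(α) = [−(2+7√3)α⁴ + 2(15+√2−11√3+√6)α³ + 2(57+3√2−10√3+3√6)α² + 6(20+√2+√6)α + 24]/(6(α+2)²). -/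

import Mathlib

/-!
In `B₊(α)` the `(1,3)` entry is the multiple `r = (3α + 4)/(α + 2)` of the `(1,2)` entry
`b = -α/(2√3)`, so its second and third minors depend on `b` only through `b² = α²/12`: this is why
`√3` is absent from them. The only other squares of radicals come from the remaining off-diagonal
entries of `B₊` and `B₋`; once these are expanded, every determinant is linear in `√2`, `√3` and
`√6`, and the formulas become identities of rational functions of `α`.
-/

open MeasureTheory Metric Real Filter

noncomputable section

/-- `ℝ³` as Euclidean space. -/
abbrev E3 : Type := EuclideanSpace ℝ (Fin 3)

/-- Partial derivative `∂ᵢ f` on `ℝ³`. -/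
def pd (i : Fin 3) (f : E3 → ℝ) (x : E3) : ℝ :=
  fderiv ℝ f x (EuclideanSpace.single i 1)

/-- Laplacian on `ℝ³`. -/
def lap (f : E3 → ℝ) (x : E3) : ℝ := ∑ i, pd i (pd i f) x

/-- Divergence of a vector field on `ℝ³`. -/
def divg (u : E3 → Fin 3 → ℝ) (x : E3) : ℝ := ∑ k, pd k (fun y => u y k) x

/-- The 3D Lamé operator `(Lu)ᵢ = -Δuᵢ - α ∂ᵢ (div u)`. -/
def lame (α : ℝ) (u : E3 → Fin 3 → ℝ) (x : E3) (i : Fin 3) : ℝ :=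
  - lap (fun y => u y i) x - α * pd i (divg u) x

/-- The constant `c_α = (α+2)/(8π(α+1))`. -/
def cA (α : ℝ) : ℝ := (α + 2) / (8 * Real.pi * (α + 1))

/-- The fundamental matrix `Φ` of the 3D Lamé system:
`Φ_ij(x) = c_α |x|⁻¹ (δ_ij + (α/(α+2)) xᵢxⱼ/|x|²)`. -/
def Phi (α : ℝ) (x : E3) (i j : Fin 3) : ℝ :=
  cA α * ‖x‖⁻¹ * ((if i = j then (1 : ℝ) else 0) + (α / (α + 2)) * (x i * x j) / ‖x‖ ^ 2)

/-- `u ∈ C₀^∞(U; ℝ³)`: smooth, compactly supported, with support inside `U`. -/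
def IsTestOn (U : Set E3) (u : E3 → Fin 3 → ℝ) : Prop :=
  ContDiff ℝ (⊤ : ℕ∞) u ∧ HasCompactSupport u ∧ tsupport u ⊆ U

/-- `∫_{ℝ³} (Lu)·(Φ(·-y) u) dx`. -/
def lameEnergy (α : ℝ) (u : E3 → Fin 3 → ℝ) (y : E3) : ℝ :=
  ∫ x : E3, ∑ i, ∑ j, lame α u x i * Phi α (x - y) i j * u x j

/-- The matrix `B₊(α)`. -/
def Bplus (α : ℝ) : Matrix (Fin 3) (Fin 3) ℝ :=
  !![1 + (α / 3) * ((2 * α + 3) / (α + 2)), -(α / (2 * Real.sqrt 3)),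
       -(α / (2 * Real.sqrt 3)) * ((3 * α + 4) / (α + 2));
     -(α / (2 * Real.sqrt 3)), 1 - (1 / Real.sqrt 2) * (α / (α + 2)),
       -(α / 2) * ((α + (Real.sqrt 2)⁻¹) / (α + 2));
     -(α / (2 * Real.sqrt 3)) * ((3 * α + 4) / (α + 2)),
       -(α / 2) * ((α + (Real.sqrt 2)⁻¹) / (α + 2)), α]

/-- The matrix `B₋(α)`. -/
def Bminus (α : ℝ) : Matrix (Fin 2) (Fin 2) ℝ :=
  !![1 + (α / 3) * ((2 * α + 3) / (α + 2)),
       (α / 2) * ((3 * α + 4) / (α + 2)) + α / (2 * Real.sqrt 3);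
     (α / 2) * ((3 * α + 4) / (α + 2)) + α / (2 * Real.sqrt 3),
       1 + 3 * α + (α / (α + 2)) * (1 + (1 + Real.sqrt 3) / Real.sqrt 2 - Real.sqrt 3 * α)]

theorem sqrt_six_eq_sqrt_two_mul_sqrt_three : √6 = √2 * √3 := by
  rw [← Real.sqrt_mul zero_le_two]
  norm_num

theorem det_symm_fin_three_of_proportional {R : Type*} [CommRing R] (a b d e f r : R) :
    !![a, b, b * r; b, d, e; b * r, e, f].det =
      f * !![a, b; b, d].det + b ^ 2 * (2 * r * e - r ^ 2 * d) - a * e ^ 2 := by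
  simp only [Matrix.det_fin_three, Matrix.det_fin_two_of, Matrix.of_apply, Matrix.cons_val',
    Matrix.cons_val]
  ring

theorem det_Bplus_eq_minor_add (α : ℝ) :
    (Bplus α).det =
      α * !![Bplus α 0 0, Bplus α 0 1; Bplus α 1 0, Bplus α 1 1].det +
        Bplus α 0 1 ^ 2 * (2 * ((3 * α + 4) / (α + 2)) * Bplus α 1 2 -
          ((3 * α + 4) / (α + 2)) ^ 2 * Bplus α 1 1) -
        Bplus α 0 0 * Bplus α 1 2 ^ 2 :=
  det_symm_fin_three_of_proportional ..

theorem Bplus_zero_one_sq (α : ℝ) : Bplus α 0 1 ^ 2 = α ^ 2 / 12 := by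
  calc (-(α / (2 * √3))) ^ 2 = α ^ 2 / (4 * √3 ^ 2) := by ring
    _ = α ^ 2 / 12 := by rw [Real.sq_sqrt zero_le_three]; norm_num

section ClosedForms

variable {α : ℝ} (hα : α + 2 ≠ 0)
include hα

theorem Bplus_zero_zero : Bplus α 0 0 = (2 * α ^ 2 + 6 * α + 6) / (3 * (α + 2)) := by
  change 1 + (α / 3) * ((2 * α + 3) / (α + 2)) = _
  field_simp
  ring

theorem Bplus_one_one : Bplus α 1 1 = ((2 - √2) * α + 4) / (2 * (α + 2)) := by
  change 1 - (1 / √2) * (α / (α + 2)) = _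
  rw [← Real.sqrt_div_self']
  field_simp
  ring

theorem Bplus_one_two : Bplus α 1 2 = -(α * (2 * α + √2)) / (4 * (α + 2)) := by
  change -(α / 2) * ((α + (√2)⁻¹) / (α + 2)) = _
  rw [← one_div, ← Real.sqrt_div_self']
  field_simp
  ring

theorem Bplus_one_two_sq :
    Bplus α 1 2 ^ 2 = α ^ 2 * (2 * α ^ 2 + 2 * √2 * α + 1) / (8 * (α + 2) ^ 2) := by
  have expand : (2 * α + √2) ^ 2 = 2 * (2 * α ^ 2 + 2 * √2 * α + 1) := by
    linear_combination Real.sq_sqrt zero_le_two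
  rw [Bplus_one_two hα, div_pow, neg_sq, mul_pow, expand]
  field_simp
  ring

theorem Bminus_zero_one :
    Bminus α 0 1 = α * (9 * α + 12 + √3 * (α + 2)) / (6 * (α + 2)) := by
  change (α / 2) * ((3 * α + 4) / (α + 2)) + α / (2 * √3) = _
  rw [div_mul_eq_div_mul_one_div α 2 (√3), ← Real.sqrt_div_self']
  field_simp
  ring

theorem Bminus_zero_one_sq :
    Bminus α 0 1 ^ 2 =
      α ^ 2 * (14 * α ^ 2 + 38 * α + 26 + √3 * (3 * α ^ 2 + 10 * α + 8)) /
        (6 * (α + 2) ^ 2) := by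
  have expand : (9 * α + 12 + √3 * (α + 2)) ^ 2 =
      6 * (14 * α ^ 2 + 38 * α + 26 + √3 * (3 * α ^ 2 + 10 * α + 8)) := by
    linear_combination (α + 2) ^ 2 * Real.sq_sqrt zero_le_three
  rw [Bminus_zero_one hα, div_pow, mul_pow, expand]
  field_simp

theorem Bminus_one_one :
    Bminus α 1 1 =
      (2 * (3 - √3) * α ^ 2 + (16 + √2 + √6) * α + 4) / (2 * (α + 2)) := by
  change 1 + 3 * α + (α / (α + 2)) * (1 + (1 + √3) / √2 - √3 * α) = _
  rw [div_eq_mul_one_div (1 + √3), ← Real.sqrt_div_self', sqrt_six_eq_sqrt_two_mul_sqrt_three]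
  field_simp
  ring

theorem det_Bplus_leading_two :
    !![Bplus α 0 0, Bplus α 0 1; Bplus α 1 0, Bplus α 1 1].det =
      -(α ^ 4 - 4 * (1 - √2) * α ^ 3 - 12 * (3 - √2) * α ^ 2 - 12 * (6 - √2) * α - 48) /
        (12 * (α + 2) ^ 2) := by
  have symm : Bplus α 1 0 = Bplus α 0 1 := rfl
  rw [Matrix.det_fin_two_of, symm, ← sq, Bplus_zero_one_sq, Bplus_zero_zero hα, Bplus_one_one hα]
  field_simp
  ring

theorem det_Bplus :
    (Bplus α).det =
      -(α * (6 * α ^ 5 + (23 + 3 * √2) * α ^ 4 + (13 + 19 * √2) * α ^ 3 -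
          (77 - 38 * √2) * α ^ 2 - (157 - 24 * √2) * α - 96)) / (12 * (α + 2) ^ 3) := by
  rw [det_Bplus_eq_minor_add, det_Bplus_leading_two hα, Bplus_zero_one_sq, Bplus_one_two_sq hα,
    Bplus_zero_zero hα, Bplus_one_one hα, Bplus_one_two hα]
  field_simp
  ring

theorem det_Bminus :
    (Bminus α).det =
      (-(2 + 7 * √3) * α ^ 4 + 2 * (15 + √2 - 11 * √3 + √6) * α ^ 3 +
          2 * (57 + 3 * √2 - 10 * √3 + 3 * √6) * α ^ 2 + 6 * (20 + √2 + √6) * α + 24) /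
        (6 * (α + 2) ^ 2) := by
  have symm : Bminus α 1 0 = Bminus α 0 1 := rfl
  have corner : Bminus α 0 0 = Bplus α 0 0 := rfl
  rw [Matrix.det_fin_two, symm, ← sq, corner, Bminus_zero_one_sq hα, Bplus_zero_zero hα,
    Bminus_one_one hα]
  field_simp
  ring

end ClosedForms

theorem Bplus_Bminus_minors_general (α : ℝ) (hα : α + 2 ≠ 0) :
    (Bplus α 0 0 = (2 * α ^ 2 + 6 * α + 6) / (3 * (α + 2))) ∧
    (Matrix.det !![Bplus α 0 0, Bplus α 0 1; Bplus α 1 0, Bplus α 1 1] =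
      -(α ^ 4 - 4 * (1 - √2) * α ^ 3 - 12 * (3 - √2) * α ^ 2 -
          12 * (6 - √2) * α - 48) / (12 * (α + 2) ^ 2)) ∧
    (Matrix.det (Bplus α) =
      -(α * (6 * α ^ 5 + (23 + 3 * √2) * α ^ 4 + (13 + 19 * √2) * α ^ 3 -
          (77 - 38 * √2) * α ^ 2 - (157 - 24 * √2) * α - 96)) /
        (12 * (α + 2) ^ 3)) ∧
    (Matrix.det (Bminus α) =
      (-(2 + 7 * √3) * α ^ 4 +
          2 * (15 + √2 - 11 * √3 + √6) * α ^ 3 +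
          2 * (57 + 3 * √2 - 10 * √3 + 3 * √6) * α ^ 2 +
          6 * (20 + √2 + √6) * α + 24) / (6 * (α + 2) ^ 2)) :=
  ⟨Bplus_zero_zero hα, det_Bplus_leading_two hα, det_Bplus hα, det_Bminus hα⟩

/-- The leading principal minors of `B₊(α)` and the determinant of `B₋(α)`. -/
theorem Bplus_Bminus_minors (α : ℝ) (hα : -1 < α) :
    (Bplus α 0 0 = (2 * α ^ 2 + 6 * α + 6) / (3 * (α + 2))) ∧
    (Matrix.det !![Bplus α 0 0, Bplus α 0 1; Bplus α 1 0, Bplus α 1 1] =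
      -(α ^ 4 - 4 * (1 - Real.sqrt 2) * α ^ 3 - 12 * (3 - Real.sqrt 2) * α ^ 2 -
          12 * (6 - Real.sqrt 2) * α - 48) / (12 * (α + 2) ^ 2)) ∧
    (Matrix.det (Bplus α) =
      -(α * (6 * α ^ 5 + (23 + 3 * Real.sqrt 2) * α ^ 4 + (13 + 19 * Real.sqrt 2) * α ^ 3 -
          (77 - 38 * Real.sqrt 2) * α ^ 2 - (157 - 24 * Real.sqrt 2) * α - 96)) /
        (12 * (α + 2) ^ 3)) ∧
    (Matrix.det (Bminus α) =
      (-(2 + 7 * Real.sqrt 3) * α ^ 4 +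
          2 * (15 + Real.sqrt 2 - 11 * Real.sqrt 3 + Real.sqrt 6) * α ^ 3 +
          2 * (57 + 3 * Real.sqrt 2 - 10 * Real.sqrt 3 + 3 * Real.sqrt 6) * α ^ 2 +
          6 * (20 + Real.sqrt 2 + Real.sqrt 6) * α + 24) / (6 * (α + 2) ^ 2)) :=
  Bplus_Bminus_minors_general α (by linarith)
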